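/- arXiv:0811.4691 — 2 statements merged into one kernel-verified Lean document; each statement's English description precedes it below -/
import Mathlib

section
/- Let k be a field and R a k-subalgebra of an affine domain T over k. Then R is a Jaffard domain: for every natural number n ≥ 1, the Krull dimension of the polynomial ring R[X₁, …, Xₙ] equals n plus the Krull dimension of R. -/
open Algebra Cardinal in
/-- Dimension equals transcendence degree for affine domains. -/
theorem affine_dim_trdeg (k : Type*) (S : Type*) [Field k] [CommRing S] [IsDomain S]
    [Algebra k S] [Algebra.FiniteType k S] :
    ∃ s : ℕ, ringKrullDim S = s ∧ Algebra.trdeg k S = s := by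
  obtain ⟨s, g, hinj, hint⟩ := exists_integral_inj_algHom_of_fg k S
  refine ⟨s, ?_, ?_⟩
  · have h0 : ringKrullDim (MvPolynomial (Fin s) k) = s := by
      simp
    rw [← h0]
    let _ : Algebra (MvPolynomial (Fin s) k) S := g.toRingHom.toAlgebra
    have : Algebra.IsIntegral (MvPolynomial (Fin s) k) S := ⟨hint⟩
    have hfs : FaithfulSMul (MvPolynomial (Fin s) k) S :=
      (faithfulSMul_iff_algebraMap_injective _ _).mpr hinj
    apply le_antisymm
    · refine Order.krullDim_le_of_strictMono
        (PrimeSpectrum.comap (algebraMap (MvPolynomial (Fin s) k) S)) fun P Q h => ?_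
      exact Ideal.IsIntegral.comap_lt_comap (I := P.asIdeal) (J := Q.asIdeal) h
    · refine iSup_le fun l => ?_
      obtain ⟨P, hP⟩ := Algebra.IsIntegral.comap_surjective (MvPolynomial (Fin s) k) S l.head
      have : P.asIdeal.LiesOver (RelSeries.head l).asIdeal := ⟨by rw [← hP]; rfl⟩
      obtain ⟨L, hL, -⟩ := Ideal.exists_ltSeries_of_hasGoingUp l P.asIdeal
      rw [← hL]
      exact Order.LTSeries.length_le_krullDim L
  · let _ : Algebra (MvPolynomial (Fin s) k) S := g.toRingHom.toAlgebra
    have : IsScalarTower k (MvPolynomial (Fin s) k) S :=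
      IsScalarTower.of_algebraMap_eq fun x => (g.commutes x).symm
    have : Algebra.IsIntegral (MvPolynomial (Fin s) k) S := ⟨hint⟩
    have hfs : FaithfulSMul (MvPolynomial (Fin s) k) S :=
      (faithfulSMul_iff_algebraMap_injective _ _).mpr hinj
    have h := lift_trdeg_add_eq k (MvPolynomial (Fin s) k) S
    rw [trdeg_eq_zero (R := MvPolynomial (Fin s) k), MvPolynomial.trdeg_of_isDomain] at h
    simpa [Cardinal.lift_eq_nat_iff, eq_comm] using h

/-- Krull dimension is at most the transcendence degree. -/
theorem dim_le_trdeg (k : Type*) (R : Type*) [Field k] [CommRing R] [IsDomain R]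
    [Algebra k R] (d : ℕ) (hd : Algebra.trdeg k R = d) : ringKrullDim R ≤ d := by
  refine iSup_le fun l => ?_
  have hx : ∀ i : Fin l.length, ∃ x, x ∈ (l i.succ).asIdeal ∧ x ∉ (l i.castSucc).asIdeal := by
    intro i
    have : (l i.castSucc).asIdeal < (l i.succ).asIdeal := l.step i
    exact (SetLike.lt_iff_le_and_exists.mp this).2
  choose x hx1 hx2 using hx
  let B := Algebra.adjoin k (Set.range x)
  have : Algebra.FiniteType k B :=
    B.fg_iff_finiteType.mp (Subalgebra.fg_def.mpr ⟨_, Set.finite_range x, rfl⟩)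
  obtain ⟨s, hs1, hs2⟩ := affine_dim_trdeg k B
  have h1 : (s : Cardinal) ≤ d := by
    rw [← hd, ← hs2]
    exact trdeg_le_of_injective B.val Subtype.val_injective
  have h2 : s ≤ d := by exact_mod_cast h1
  let f : Fin (l.length + 1) → PrimeSpectrum B := fun i => PrimeSpectrum.comap (algebraMap B R) (l i)
  have hf : StrictMono f := by
    rw [Fin.strictMono_iff_lt_succ]
    intro i
    refine lt_of_le_of_ne (Ideal.comap_mono (l.step i).le) fun h => hx2 i ?_
    have hm : (⟨x i, Algebra.subset_adjoin ⟨i, rfl⟩⟩ : B) ∈ (f i.succ).asIdeal := hx1 i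
    rw [← h] at hm
    exact hm
  have h3 := Order.LTSeries.length_le_krullDim (LTSeries.mk l.length f hf)
  have h4 : ((l.length : ℕ) : WithBot ℕ∞) ≤ s := hs1 ▸ h3
  exact h4.trans (by exact_mod_cast h2)

universe u v

/-- An algebraic specialization of `T` over `R`. -/
theorem exists_alg_field {R : Type u} {T : Type v} [CommRing R] [IsDomain R] [CommRing T] [IsDomain T]
    [Algebra R T] [FaithfulSMul R T] [Algebra.FiniteType R T] :
    ∃ (L : Type (max u v)) (_ : Field L) (_ : Algebra R L) (_ : T →ₐ[R] L),
      FaithfulSMul R L ∧ Algebra.IsAlgebraic R L := by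
  let K := FractionRing R
  have : Nontrivial (TensorProduct R K T) :=
    Algebra.TensorProduct.nontrivial_of_algebraMap_injective_of_isDomain R K T
      (FaithfulSMul.algebraMap_injective _ _) (FaithfulSMul.algebraMap_injective _ _)
  obtain ⟨m, hm⟩ := Ideal.exists_maximal (TensorProduct R K T)
  let _ : Field (TensorProduct R K T ⧸ m) := Ideal.Quotient.field m
  have : Module.Finite K (TensorProduct R K T ⧸ m) := finite_of_finite_type_of_isJacobsonRing _ _
  refine ⟨TensorProduct R K T ⧸ m, inferInstance, inferInstance,
    (Ideal.Quotient.mkₐ R m).comp Algebra.TensorProduct.includeRight, ?_, ?_⟩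
  · have : FaithfulSMul K (TensorProduct R K T ⧸ m) :=
      (faithfulSMul_iff_algebraMap_injective _ _).mpr (RingHom.injective _)
    exact FaithfulSMul.trans R K _
  · have : Algebra.IsAlgebraic R K := IsLocalization.isAlgebraic K (nonZeroDivisors R)
    have : Algebra.IsAlgebraic K (TensorProduct R K T ⧸ m) := Algebra.IsAlgebraic.of_finite K _
    exact Algebra.IsAlgebraic.trans R K _

/-- The lower bound. -/
theorem trdeg_le_dim (k : Type*) {R T : Type*} [Field k] [CommRing R] [IsDomain R] [CommRing T]
    [IsDomain T] [Algebra k R] [Algebra k T] [Algebra R T] [IsScalarTower k R T]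
    [FaithfulSMul R T] [Algebra.FiniteType k T] :
    ∃ d : ℕ, (d : WithBot ℕ∞) ≤ ringKrullDim R ∧ Algebra.trdeg k R = d := by
  classical
  have : Algebra.FiniteType R T := Algebra.FiniteType.of_restrictScalars_finiteType k R T
  obtain ⟨L, _, _, φ, hfs, halg⟩ := exists_alg_field (R := R) (T := T)
  let _ : Algebra k L := ((algebraMap R L).comp (algebraMap k R)).toAlgebra
  have : IsScalarTower k R L := IsScalarTower.of_algebraMap_eq fun x => rfl
  obtain ⟨s, hs⟩ := (‹Algebra.FiniteType k T›).out
  obtain ⟨f, hf0, hf⟩ := Algebra.IsAlgebraic.exists_integral_multiples R (s.image φ)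
  have hfL : algebraMap R L f ≠ 0 := by
    simpa using hf0
  let S := Algebra.adjoin k (insert (algebraMap R L f)⁻¹ (Set.image φ s))
  have : Algebra.FiniteType k S :=
    S.fg_iff_finiteType.mp (Subalgebra.fg_def.mpr ⟨_, (s.finite_toSet.image _).insert _, rfl⟩)
  have hT : ∀ t : T, φ t ∈ S := by
    intro t
    have ht : t ∈ Algebra.adjoin k (s : Set T) := by rw [hs]; trivial
    have h1 : φ t ∈ (Algebra.adjoin k (s : Set T)).map (φ.restrictScalars k) := ⟨t, ht, rfl⟩
    rw [AlgHom.map_adjoin] at h1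
    exact Algebra.adjoin_mono (Set.subset_insert _ _) h1
  have hR : ∀ r : R, algebraMap R L r ∈ S := fun r => by
    rw [← φ.commutes r]; exact hT _
  let _ : Algebra R S := ((algebraMap R L).codRestrict S hR).toAlgebra
  have : IsScalarTower R S L := IsScalarTower.of_algebraMap_eq fun x => rfl
  have : IsScalarTower k R S := IsScalarTower.of_algebraMap_eq fun x => Subtype.ext rfl
  have : FaithfulSMul R S := (faithfulSMul_iff_algebraMap_injective _ _).mpr fun a b h =>
    FaithfulSMul.algebraMap_injective R L (congrArg Subtype.val h)
  have hSalg : Algebra.IsAlgebraic R S := Algebra.IsAlgebraic.of_injective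
    (IsScalarTower.toAlgHom R S L) Subtype.val_injective
  have key : ∀ x ∈ S, ∃ N : ℕ, IsIntegral R (algebraMap R L f ^ N * x) := by
    intro x hx
    induction hx using Algebra.adjoin_induction with
    | mem x hx =>
      refine ⟨1, ?_⟩
      rcases hx with rfl | ⟨t, ht, rfl⟩
      · rw [pow_one, mul_inv_cancel₀ hfL]; exact isIntegral_one
      · rw [pow_one, ← Algebra.smul_def]
        exact hf _ (Finset.mem_image_of_mem _ ht)
    | algebraMap r =>
      refine ⟨0, ?_⟩
      rw [IsScalarTower.algebraMap_apply k R L, pow_zero, one_mul]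
      exact isIntegral_algebraMap
    | add x y _ _ hx hy =>
      obtain ⟨N, hN⟩ := hx
      obtain ⟨M, hM⟩ := hy
      refine ⟨N + M, ?_⟩
      have e : algebraMap R L f ^ (N + M) * (x + y) =
        algebraMap R L (f ^ M) * (algebraMap R L f ^ N * x) +
        algebraMap R L (f ^ N) * (algebraMap R L f ^ M * y) := by
        rw [map_pow, map_pow]; ring
      rw [e]
      exact (isIntegral_algebraMap.mul hN).add (isIntegral_algebraMap.mul hM)
    | mul x y _ _ hx hy =>
      obtain ⟨N, hN⟩ := hx
      obtain ⟨M, hM⟩ := hy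
      refine ⟨N + M, ?_⟩
      have e : algebraMap R L f ^ (N + M) * (x * y) =
        (algebraMap R L f ^ N * x) * (algebraMap R L f ^ M * y) := by ring
      rw [e]
      exact hN.mul hM
  have hunit : IsUnit (algebraMap R S f) := by
    refine IsUnit.of_mul_eq_one ⟨(algebraMap R L f)⁻¹, Algebra.subset_adjoin (Set.mem_insert _ _)⟩ ?_
    exact Subtype.ext (mul_inv_cancel₀ hfL)
  obtain ⟨d, hd1, hd2⟩ := affine_dim_trdeg k S
  refine ⟨d, ?_, ?_⟩
  · rw [← hd1]
    refine Order.krullDim_le_of_strictMono (PrimeSpectrum.comap (algebraMap R S)) fun P Q h => ?_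
    obtain ⟨hle, x, hxQ, hxP⟩ := SetLike.lt_iff_le_and_exists.mp
      (show P.asIdeal < Q.asIdeal from h)
    obtain ⟨N, hN⟩ := key x x.2
    refine Ideal.comap_lt_comap_of_integral_mem_sdiff (I := P.asIdeal) (J := Q.asIdeal) hle
      (x := algebraMap R S f ^ N * x) ⟨Ideal.mul_mem_left _ _ hxQ, fun hmem => hxP ?_⟩ ?_
    · exact (Ideal.unit_mul_mem_iff_mem _ (hunit.pow N)).mp hmem
    · exact (isIntegral_algHom_iff (IsScalarTower.toAlgHom R S L) Subtype.val_injective).mp hN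
  · have h := lift_trdeg_add_eq k R S
    rw [trdeg_eq_zero (R := R), hd2] at h
    simpa [Cardinal.lift_eq_nat_iff, eq_comm] using h

/-- Let `k` be a field and `R` a `k`-subalgebra of an affine domain `T` over `k`.  Then
`R` is a Jaffard domain: for every `n ≥ 1`, the Krull dimension of the polynomial ring
`R[X₁, …, Xₙ]` equals `n` plus the Krull dimension of `R`. -/
theorem jaffard_of_subalgebra_of_affine
    {k T : Type*} [Field k] [CommRing T] [IsDomain T] [Algebra k T]
    [Algebra.FiniteType k T] (R : Subalgebra k T) :
    ∀ n : ℕ, 1 ≤ n →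
      ringKrullDim (MvPolynomial (Fin n) R) = (n : WithBot ℕ∞) + ringKrullDim R := by
  intro n _
  obtain ⟨d, hd1, hd2⟩ := trdeg_le_dim k (R := R) (T := T)
  have htr : Algebra.trdeg k (MvPolynomial (Fin n) R) = ((n + d : ℕ) : Cardinal) := by
    rw [← trdeg_add_eq k R, hd2, MvPolynomial.trdeg_of_isDomain]
    simp [add_comm]
  apply le_antisymm
  · refine (dim_le_trdeg k _ (n + d) htr).trans ?_
    push_cast
    gcongr
  · have := ringKrullDim_add_natCard_le_ringKrullDim_mvPolynomial (R := R) (Fin n)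
    rw [Nat.card_fin, add_comm] at this
    exact this
end

section
/- Let k be a field, T an affine domain over k, and R a k-subalgebra of T. Then for every prime ideal P of T, the Krull dimension of R equals the height of the prime ideal P ∩ R of R plus the transcendence degree over k of the fraction field of the quotient domain R/(P ∩ R). -/
/-- The transcendence degree of a commutative `k`-algebra `A`: the supremum of the
cardinalities of the subsets of `A` that are algebraically independent over `k`. -/
noncomputable def trdeg (k A : Type*) [CommRing k] [CommRing A] [Algebra k A] : Cardinal :=
  ⨆ s : { s : Set A // AlgebraicIndependent k ((↑) : s → A) }, Cardinal.mk s.1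

/-- The `k`-algebra structure on the fraction field of a `k`-algebra `S`, obtained by
composing `k → S → Frac(S)`. -/
noncomputable def fractionRingAlgebra (k S : Type*) [CommRing k] [CommRing S] [Algebra k S] :
    Algebra k (FractionRing S) :=
  ((algebraMap S (FractionRing S)).comp (algebraMap k S)).toAlgebra

/-- `td(S)`: the transcendence degree over `k` of the fraction field of `S`. -/
noncomputable def fractionFieldTrdeg (k S : Type*) [CommRing k] [CommRing S] [Algebra k S] :
    Cardinal :=
  @trdeg k (FractionRing S) _ _ (fractionRingAlgebra k S)

/-- A cardinal viewed in `WithBot (WithTop ℕ)` (the codomain of `ringKrullDim`),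
infinite cardinals being sent to `⊤`. -/
noncomputable def cardinalToKrullDim (c : Cardinal) : WithBot ℕ∞ :=
  ((Cardinal.toENat c : ℕ∞) : WithBot ℕ∞)

namespace SubAff
universe u v
open Cardinal

noncomputable def td (k : Type u) (A : Type v) [CommRing k] [CommRing A] [Algebra k A] : ℕ :=
  Cardinal.toNat (Algebra.trdeg k A)

section
variable {k : Type u} [Field k]

theorem td_le_of_inj {A B : Type v} [CommRing A] [CommRing B] [Algebra k A] [Algebra k B]
    (f : A →ₐ[k] B) (hf : Function.Injective f) (hB : Algebra.trdeg k B < ℵ₀) :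
    td k A ≤ td k B :=
  Cardinal.toNat_le_toNat (trdeg_le_of_injective f hf) hB

/-- strict drop of transcendence degree -/
theorem td_quot_lt {A : Type v} [CommRing A] [IsDomain A] [Algebra k A]
    (hA : Algebra.trdeg k A < ℵ₀) (p : Ideal A) [p.IsPrime] (hp : p ≠ ⊥) :
    td k (A ⧸ p) < td k A := by
  have hle : Algebra.trdeg k (A ⧸ p) ≤ Algebra.trdeg k A :=
    trdeg_le_of_surjective (Ideal.Quotient.mkₐ k p) (Ideal.Quotient.mkₐ_surjective k p)
  have hq : Algebra.trdeg k (A ⧸ p) < ℵ₀ := hle.trans_lt hA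
  refine lt_of_le_of_ne (Cardinal.toNat_le_toNat hle hA) fun heq => ?_
  have heq' : Algebra.trdeg k (A ⧸ p) = Algebra.trdeg k A :=
    Cardinal.toNat_injOn hq hA heq
  have : FaithfulSMul k (A ⧸ p) := (faithfulSMul_iff_algebraMap_injective _ _).2
    (algebraMap k (A ⧸ p)).injective
  obtain ⟨ι, x, hx⟩ := exists_isTranscendenceBasis' k (A ⧸ p)
  choose y hy using fun i => Ideal.Quotient.mkₐ_surjective k p (x i)
  have hxy : x = Ideal.Quotient.mkₐ k p ∘ y := by ext i; exact (hy i).symm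
  have hind : AlgebraicIndependent k y := by
    have := hx.1
    rw [hxy] at this
    exact this.of_comp _
  have hb : IsTranscendenceBasis k y := hind.isTranscendenceBasis_of_trdeg_le hA
    (by rw [hx.cardinalMk_eq_trdeg, heq'])
  have := hb.isAlgebraic
  obtain ⟨a, ha, ha0⟩ := Submodule.exists_mem_ne_zero_of_ne_bot hp
  have hne := Ideal.comap_ne_bot_of_algebraic_mem (R := Algebra.adjoin k (Set.range y)) ha0 ha
    (Algebra.IsAlgebraic.isAlgebraic a)
  obtain ⟨⟨c, hc⟩, hcp, hc0⟩ := Submodule.exists_mem_ne_zero_of_ne_bot hne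
  have hcp' : c ∈ p := hcp
  rw [Algebra.adjoin_range_eq_range_aeval] at hc
  obtain ⟨g, rfl⟩ := hc
  have h0 : MvPolynomial.aeval x g = 0 := by
    have h1 : MvPolynomial.aeval x = (Ideal.Quotient.mkₐ k p).comp (MvPolynomial.aeval y) := by
      rw [hxy]; ext; simp
    rw [h1]
    exact Ideal.Quotient.eq_zero_iff_mem.2 hcp'
  have hg : g = 0 := by
    have := hx.1
    exact (injective_iff_map_eq_zero _).1 this g h0
  apply hc0
  subst hg
  ext
  simp

theorem td_le_minimal {T : Type v} [CommRing T] [IsDomain T] [Algebra k T]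
    [Algebra.FiniteType k T] (Q : Ideal T) [Q.IsPrime] (hQ : Q ≠ ⊥)
    (hmin : ∀ J : Ideal T, J.IsPrime → J < Q → J = ⊥) :
    td k T ≤ td k (T ⧸ Q) + 1 := by
  obtain ⟨s, g, hg, hgInt⟩ := exists_integral_inj_algHom_of_fg k T
  have hT1 : td k T ≤ s := by
    have : Algebra.IsAlgebraic (Algebra.adjoin k (Set.range fun i => g (MvPolynomial.X i))) T := by
      constructor
      intro t
      obtain ⟨p, hp, hpt⟩ := hgInt t
      have hmem : ∀ a, g a ∈ Algebra.adjoin k (Set.range fun i => g (MvPolynomial.X i)) := by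
        intro a
        rw [Algebra.adjoin_range_eq_range_aeval]
        refine ⟨a, ?_⟩
        have : MvPolynomial.aeval (fun i => g (MvPolynomial.X i)) = g := by ext; simp
        exact congr($this a)
      refine ⟨p.map (g.codRestrict _ hmem).toRingHom, (hp.map _).ne_zero, ?_⟩
      rw [Polynomial.aeval_def, Polynomial.eval₂_map]
      exact hpt
    have := Algebra.IsAlgebraic.trdeg_le_cardinalMk k (Set.range fun i => g (MvPolynomial.X i))
    have h2 := Cardinal.toNat_le_toNat this (Cardinal.lt_aleph0_of_finite _)
    refine h2.trans ?_
    rw [← Nat.card]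
    have := Finite.card_range_le (fun i => g (MvPolynomial.X i))
    simpa using this
  algebraize [g.toRingHom]
  have : FaithfulSMul (MvPolynomial (Fin s) k) T := (faithfulSMul_iff_algebraMap_injective _ _).2 hg
  have : Algebra.IsIntegral (MvPolynomial (Fin s) k) T := ⟨hgInt⟩
  have hq : Q.under (MvPolynomial (Fin s) k) ≠ ⊥ := by
    obtain ⟨a, ha, ha0⟩ := Submodule.exists_mem_ne_zero_of_ne_bot hQ
    exact Ideal.comap_ne_bot_of_integral_mem ha0 ha (Algebra.IsIntegral.isIntegral a)
  obtain ⟨π, hπ, hπp⟩ := Ideal.IsPrime.exists_mem_prime_of_ne_bot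
    (inferInstance : (Q.under (MvPolynomial (Fin s) k)).IsPrime) hq
  have hsp : (Ideal.span {π}).IsPrime := (Ideal.span_singleton_prime hπp.ne_zero).2 hπp
  obtain ⟨Q', hle, hpr, hlo⟩ := Ideal.exists_ideal_le_liesOver_of_le (p := Ideal.span {π})
    (q := Q.under (MvPolynomial (Fin s) k)) Q
    ((Ideal.span_singleton_le_iff_mem _).2 hπ)
  have hQ' : Q' = Q := by
    by_contra hne
    have := hmin Q' hpr (lt_of_le_of_ne hle hne)
    subst this
    have h1 : π ∈ (⊥ : Ideal T).under (MvPolynomial (Fin s) k) := by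
      rw [← hlo.over]; exact Ideal.mem_span_singleton_self _
    have : g π = 0 := h1
    exact hπp.ne_zero (hg (by simpa using this))
  subst hQ'
  have hπu := hπp.not_isUnit
  have : ∃ i, 0 < MvPolynomial.degreeOf i π := by
    by_contra! hcon
    apply hπu
    have hv : π.vars = ∅ := by
      ext i
      simp [MvPolynomial.mem_vars_iff_degreeOf_ne_zero, Nat.le_zero.1 (hcon i)]
    obtain ⟨c, rfl⟩ : ∃ c, π = MvPolynomial.C c := by
      exact ⟨_, MvPolynomial.vars_eq_empty_iff_eq_C.1 hv⟩
    have hc : c ≠ 0 := by rintro rfl; exact hπp.ne_zero (by simp)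
    exact (isUnit_iff_ne_zero.2 hc).map MvPolynomial.C
  obtain ⟨i, hi⟩ := this
  have hind : AlgebraicIndependent k
      (fun j : {j : Fin s // j ≠ i} => Ideal.Quotient.mkₐ k Q' (g (MvPolynomial.X j.1))) := by
    refine (injective_iff_map_eq_zero _).2 fun h hh => ?_
    by_contra hne
    have h1 : Ideal.Quotient.mkₐ k Q' (g (MvPolynomial.rename Subtype.val h)) = 0 := by
      rw [← hh]
      have : (Ideal.Quotient.mkₐ k Q').comp (g.comp (MvPolynomial.rename Subtype.val)) =
        (MvPolynomial.aeval (fun j : {j : Fin s // j ≠ i} =>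
          Ideal.Quotient.mkₐ k Q' (g (MvPolynomial.X j.1)))) := by
        ext j; simp
      exact congr($this h)
    have h2 : MvPolynomial.rename Subtype.val h ∈ Ideal.span {π} := by
      rw [hlo.over]
      exact (Ideal.Quotient.eq_zero_iff_mem (I := Q')).1 h1
    rw [Ideal.mem_span_singleton] at h2
    obtain ⟨c, hc⟩ := h2
    have hr0 : MvPolynomial.rename Subtype.val h ≠ (0 : MvPolynomial (Fin s) k) := fun h0 =>
      hne (MvPolynomial.rename_injective _ Subtype.val_injective (by simpa using h0))
    have hc0 : c ≠ 0 := by rintro rfl; exact hr0 (by rw [hc, mul_zero])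
    have h3 := MvPolynomial.degreeOf_mul_eq (n := i) hπp.ne_zero hc0
    rw [← hc] at h3
    have h4 : MvPolynomial.degreeOf i (MvPolynomial.rename (Subtype.val : {j : Fin s // j ≠ i} → _) h) = 0 := by
      by_contra hne0
      classical
      have := MvPolynomial.vars_rename _ _ (MvPolynomial.mem_vars_iff_degreeOf_ne_zero.2 hne0)
      simp at this
    omega
  have h5 := hind.lift_cardinalMk_le_trdeg
  have hfin : Algebra.trdeg k (T ⧸ Q') < ℵ₀ := trdeg_lt_aleph0_of_finiteType
  have h6 := Cardinal.toNat_le_toNat h5 (by simpa using hfin)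
  simp at h6
  have : 0 < s := i.pos
  unfold td at *
  omega

theorem td_add {R T : Type v} [CommRing R] [IsDomain R] [CommRing T] [IsDomain T] [Algebra k R]
    [Algebra k T] [Algebra R T] [IsScalarTower k R T] [FaithfulSMul R T]
    (hT : Algebra.trdeg k T < ℵ₀) : td k R + td R T = td k T := by
  have : FaithfulSMul k R := (faithfulSMul_iff_algebraMap_injective _ _).2
    (algebraMap k R).injective
  have h := trdeg_add_eq k R (A := T)
  have h' := h ▸ hT
  obtain ⟨h1, h2⟩ := Cardinal.add_lt_aleph0_iff.1 h'
  rw [td, td, ← Cardinal.toNat_add h1 h2, h, td]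

theorem fibre {R T : Type v} [CommRing R] [IsDomain R] [CommRing T] [IsDomain T] [Algebra k R]
    [Algebra k T] [Algebra R T] [IsScalarTower k R T] [FaithfulSMul R T]
    [Algebra.FiniteType k T] :
    ∃ f : T, f ≠ 0 ∧ ∀ Q : Ideal T, Q.IsPrime → f ∉ Q →
      td k (T ⧸ Q) + td k R ≤ td k (R ⧸ Q.under R) + td k T := by
  have hft : Algebra.FiniteType R T := Algebra.FiniteType.of_restrictScalars_finiteType k R T
  obtain ⟨S, hS⟩ := hft.out
  have hSalg : Algebra.IsAlgebraic (Algebra.adjoin R (S : Set T)) T := by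
    constructor
    intro t
    have ht : t ∈ Algebra.adjoin R (S : Set T) := by rw [hS]; trivial
    exact isAlgebraic_algebraMap (⟨t, ht⟩ : Algebra.adjoin R (S : Set T))
  obtain ⟨s, hsS, hs⟩ := exists_isTranscendenceBasis_subset (R := R) (S : Set T)
  have alg := hs.isAlgebraic
  rw [Subtype.range_coe] at alg
  choose p hp0 hp using fun t : T => alg.isAlgebraic t
  have hkT : Algebra.trdeg k T < ℵ₀ := trdeg_lt_aleph0_of_finiteType
  have hRT : Algebra.trdeg R T < ℵ₀ := trdeg_lt_aleph0_of_finiteType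
  refine ⟨∏ t ∈ S, ((p t).leadingCoeff : T), ?_, fun Q hQ hf => ?_⟩
  · refine Finset.prod_ne_zero_iff.2 fun t _ h => hp0 t ?_
    rw [← Polynomial.leadingCoeff_eq_zero]
    exact Subtype.ext h
  have hf' : ∀ t ∈ S, ((p t).leadingCoeff : T) ∉ Q := fun t ht h =>
    hf (Ideal.mem_of_dvd _ (Finset.dvd_prod_of_mem (fun t => ((p t).leadingCoeff : T)) ht) h)
  have hfs : FaithfulSMul (R ⧸ Q.under R) (T ⧸ Q) := inferInstance
  have : IsScalarTower k (R ⧸ Q.under R) (T ⧸ Q) := by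
    refine IsScalarTower.of_algebraMap_eq fun a => ?_
    change Ideal.Quotient.mk Q (algebraMap k T a) = Ideal.Quotient.mk Q (algebraMap R T (algebraMap k R a))
    rw [← IsScalarTower.algebraMap_apply]
  let mkQ := Ideal.Quotient.mk Q
  let A' := Algebra.adjoin (R ⧸ Q.under R) (mkQ '' s)
  have hmem : ∀ a : Algebra.adjoin R s, mkQ (a : T) ∈ A' := by
    rintro ⟨a, ha⟩
    induction ha using Algebra.adjoin_induction with
    | mem x hx => exact Algebra.subset_adjoin ⟨x, hx, rfl⟩
    | algebraMap r => exact A'.algebraMap_mem (Ideal.Quotient.mk _ r)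
    | add x y _ _ h1 h2 => simpa using A'.add_mem h1 h2
    | mul x y _ _ h1 h2 => simpa using A'.mul_mem h1 h2
  let φ : Algebra.adjoin R s →+* A' :=
    (mkQ.comp (algebraMap (Algebra.adjoin R s) T)).codRestrict A' hmem
  have hS' : ∀ t ∈ S, IsAlgebraic A' (mkQ t) := by
    intro t ht
    refine ⟨(p t).map φ, fun h0 => ?_, ?_⟩
    · have h1 := congr(Polynomial.coeff $h0 (p t).natDegree)
      rw [Polynomial.coeff_map] at h1
      have h2 : mkQ ((p t).leadingCoeff : T) = 0 := congr(Subtype.val $h1)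
      exact hf' t ht (Ideal.Quotient.eq_zero_iff_mem.1 h2)
    · rw [Polynomial.aeval_def, Polynomial.eval₂_map]
      have h1 := congr(mkQ $(hp t))
      rw [Polynomial.aeval_def, Polynomial.hom_eval₂, map_zero] at h1
      exact h1
  have halg : Algebra.IsAlgebraic A' (T ⧸ Q) := by
    constructor
    intro x
    obtain ⟨t, rfl⟩ := Ideal.Quotient.mk_surjective x
    have ht : t ∈ Algebra.adjoin R (S : Set T) := by rw [hS]; trivial
    induction ht using Algebra.adjoin_induction with
    | mem x hx => exact hS' x hx
    | algebraMap r =>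
      exact isAlgebraic_algebraMap (⟨_, A'.algebraMap_mem (Ideal.Quotient.mk _ r)⟩ : A')
    | add x y _ _ h1 h2 => simpa using h1.add h2
    | mul x y _ _ h1 h2 => simpa using h1.mul h2
  have h1 : Algebra.trdeg (R ⧸ Q.under R) (T ⧸ Q) ≤ Algebra.trdeg R T := by
    refine (Algebra.IsAlgebraic.trdeg_le_cardinalMk _ (mkQ '' s)).trans ?_
    rw [← hs.cardinalMk_eq_trdeg]
    exact Cardinal.mk_image_le
  have h2 : td (R ⧸ Q.under R) (T ⧸ Q) ≤ td R T := Cardinal.toNat_le_toNat h1 hRT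
  have h3 := td_add (k := k) (R := R) hkT
  have h4 := td_add (k := k) (R := R ⧸ Q.under R) (T := T ⧸ Q) trdeg_lt_aleph0_of_finiteType
  omega

theorem trdeg_alg {R T : Type v} [CommRing R] [IsDomain R] [CommRing T] [IsDomain T] [Algebra k R]
    [Algebra k T] [Algebra R T] [IsScalarTower k R T] [FaithfulSMul R T]
    [Algebra.IsAlgebraic R T] : Algebra.trdeg k T = Algebra.trdeg k R := by
  have : FaithfulSMul k R := (faithfulSMul_iff_algebraMap_injective _ _).2
    (algebraMap k R).injective
  rw [← trdeg_add_eq k R (A := T), trdeg_eq_zero (R := R) (A := T), add_zero]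

theorem trdeg_sub_lt {R T : Type v} [CommRing R] [CommRing T] [Algebra k R]
    [Algebra k T] [Algebra R T] [IsScalarTower k R T] [FaithfulSMul R T]
    [Algebra.FiniteType k T] : Algebra.trdeg k R < ℵ₀ :=
  (trdeg_le_of_injective (IsScalarTower.toAlgHom k R T)
    (FaithfulSMul.algebraMap_injective R T)).trans_lt trdeg_lt_aleph0_of_finiteType

theorem trdeg_quot_lt {R : Type v} [CommRing R] [Algebra k R] (h : Algebra.trdeg k R < ℵ₀)
    (p : Ideal R) : Algebra.trdeg k (R ⧸ p) < ℵ₀ :=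
  (trdeg_le_of_surjective (Ideal.Quotient.mkₐ k p) (Ideal.Quotient.mkₐ_surjective k p)).trans_lt h

theorem enlarge_aux {R T K F : Type v} [CommRing R] [IsDomain R] [CommRing T] [IsDomain T]
    [Algebra k R]
    [Algebra k T] [Algebra R T] [IsScalarTower k R T] [FaithfulSMul R T]
    [Algebra.FiniteType k T] (p : Ideal R) [p.IsPrime] [Field K] [Field F] [Algebra R K]
    [Algebra (R ⧸ p) K] [IsScalarTower R (R ⧸ p) K] [IsFractionRing (R ⧸ p) K]
    [Algebra K F] [Algebra R F] [IsScalarTower R K F] [Algebra.IsAlgebraic K F] (φ : T →ₐ[R] F) :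
    ∃ P' : Ideal T, P'.IsPrime ∧ P'.under R = p ∧
      td k (T ⧸ P') ≤ td k (R ⧸ p) := by
  have hinj : Function.Injective (algebraMap (R ⧸ p) K) := IsFractionRing.injective _ _
  have hker : (RingHom.ker φ).under R = p := by
    ext r
    rw [Ideal.mem_comap, RingHom.mem_ker, AlgHom.commutes,
      IsScalarTower.algebraMap_apply R K F, map_eq_zero,
      IsScalarTower.algebraMap_apply R (R ⧸ p) K, map_eq_zero_iff _ hinj]
    exact Ideal.Quotient.eq_zero_iff_mem
  refine ⟨RingHom.ker φ, RingHom.ker_isPrime _, hker, ?_⟩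
  let : Algebra k K := ((algebraMap R K).comp (algebraMap k R)).toAlgebra
  let : Algebra k F := ((algebraMap R F).comp (algebraMap k R)).toAlgebra
  have : IsScalarTower k R K := IsScalarTower.of_algebraMap_eq' rfl
  have : IsScalarTower k R F := IsScalarTower.of_algebraMap_eq' rfl
  have : IsScalarTower k (R ⧸ p) K := IsScalarTower.of_algebraMap_eq fun a => by
    rw [IsScalarTower.algebraMap_apply k R K, IsScalarTower.algebraMap_apply k R (R ⧸ p),
      ← IsScalarTower.algebraMap_apply R (R ⧸ p) K]
  have : IsScalarTower k K F := IsScalarTower.of_algebraMap_eq fun a => by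
    rw [IsScalarTower.algebraMap_apply k R K, IsScalarTower.algebraMap_apply k R F,
      ← IsScalarTower.algebraMap_apply R K F]
  have : Algebra.IsAlgebraic (R ⧸ p) K := IsLocalization.isAlgebraic _ (nonZeroDivisors (R ⧸ p))
  have : FaithfulSMul (R ⧸ p) K := (faithfulSMul_iff_algebraMap_injective _ _).2 hinj
  have h1 : Algebra.trdeg k F = Algebra.trdeg k (R ⧸ p) := by
    rw [trdeg_alg (R := K), trdeg_alg (R := R ⧸ p)]
  let ψ : T →ₐ[k] F := φ.restrictScalars k
  have h2 : td k (T ⧸ RingHom.ker φ) ≤ td k F :=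
    td_le_of_inj (Ideal.kerLiftAlg ψ) (Ideal.kerLiftAlg_injective ψ)
      (h1 ▸ trdeg_quot_lt (trdeg_sub_lt (T := T)) p)
  rwa [td, td, h1] at h2

open TensorProduct in
theorem enlarge_tensor {R T K : Type v} [CommRing R] [IsDomain R] [CommRing T] [IsDomain T]
    [Algebra k R]
    [Algebra k T] [Algebra R T] [IsScalarTower k R T] [FaithfulSMul R T]
    [Algebra.FiniteType k T] (p : Ideal R) [p.IsPrime] [Field K] [Algebra R K]
    [Algebra (R ⧸ p) K] [IsScalarTower R (R ⧸ p) K] [IsFractionRing (R ⧸ p) K]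
    [Nontrivial (K ⊗[R] T)] :
    ∃ P' : Ideal T, P'.IsPrime ∧ P'.under R = p ∧
      td k (T ⧸ P') ≤ td k (R ⧸ p) := by
  have hft : Algebra.FiniteType R T := Algebra.FiniteType.of_restrictScalars_finiteType k R T
  obtain ⟨m, hm⟩ := Ideal.exists_maximal (K ⊗[R] T)
  let : Field ((K ⊗[R] T) ⧸ m) := Ideal.Quotient.field m
  have hfin : Module.Finite K ((K ⊗[R] T) ⧸ m) :=
    finite_of_finite_type_of_isJacobsonRing _ _
  exact enlarge_aux (K := K) (F := (K ⊗[R] T) ⧸ m) p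
    ((Ideal.Quotient.mkₐ R m).comp Algebra.TensorProduct.includeRight)

open TensorProduct in
theorem enlarge {R T : Type v} [CommRing R] [IsDomain R] [CommRing T] [IsDomain T] [Algebra k R]
    [Algebra k T] [Algebra R T] [IsScalarTower k R T] [FaithfulSMul R T]
    [Algebra.FiniteType k T] (P : Ideal T) [P.IsPrime] :
    ∃ P' : Ideal T, P'.IsPrime ∧ P'.under R = P.under R ∧
      td k (T ⧸ P') ≤ td k (R ⧸ P.under R) := by
  have hft : Algebra.FiniteType R T := Algebra.FiniteType.of_restrictScalars_finiteType k R T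
  set p := P.under R with hp
  have : Nontrivial (p.ResidueField ⊗[R] T) := by
    rw [PrimeSpectrum.nontrivial_iff_mem_rangeComap ⟨p, inferInstance⟩]
    exact ⟨⟨P, inferInstance⟩, rfl⟩
  exact enlarge_tensor (K := p.ResidueField) p

theorem min_of_height_le_one {T : Type v} [CommRing T] [IsDomain T] [IsNoetherianRing T]
    (Q : Ideal T) [Q.IsPrime] (h : Q.height ≤ 1) (J : Ideal T) (hJ : J.IsPrime) (hlt : J < Q) :
    J = ⊥ := by
  have h1 := Ideal.height_strict_mono_of_isPrime_of_isPrime hlt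
  have h2 : J.height = 0 := by
    have := h1.trans_le h
    exact Order.lt_one_iff.1 this
  exact Ideal.height_eq_zero_iff_eq_bot.1 h2

theorem step_bot {R T : Type v} [CommRing R] [IsDomain R] [CommRing T] [IsDomain T] [Algebra k R]
    [Algebra k T] [Algebra R T] [IsScalarTower k R T] [FaithfulSMul R T]
    [Algebra.FiniteType k T] (P : Ideal T) [P.IsPrime] (hP0 : P ≠ ⊥)
    (hP : td k (T ⧸ P) ≤ td k (R ⧸ P.under R)) :
    ∃ Q : Ideal T, Q.IsPrime ∧ Q ≠ ⊥ ∧ Q ≤ P ∧ td k R ≤ td k (R ⧸ Q.under R) + 1 := by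
  have : IsNoetherianRing T := Algebra.FiniteType.isNoetherianRing k T
  obtain ⟨f, hf0, hf⟩ := fibre (k := k) (R := R) (T := T)
  by_cases hex : ∃ Q : Ideal T, Q.IsPrime ∧ Q ≠ ⊥ ∧ Q ≤ P ∧ Q.height ≤ 1 ∧ f ∉ Q
  · obtain ⟨Q, hQ, hQ0, hQP, hh, hfQ⟩ := hex
    refine ⟨Q, hQ, hQ0, hQP, ?_⟩
    have h1 := hf Q hQ hfQ
    have h2 := td_le_minimal (k := k) Q hQ0 (min_of_height_le_one Q hh)
    omega
  push Not at hex
  have hPh : P.height ≤ 1 := by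
    have hfin := Ideal.finite_minimalPrimes_of_isNoetherianRing T (Ideal.span {f})
    obtain ⟨s, hs⟩ := hfin.exists_finset
    classical
    have hav := (Ideal.subset_union_prime (s := insert ⊥ s) (f := fun I : Ideal T => I) ⊥ ⊥
      (fun i hi _ _ => by
        rcases Finset.mem_insert.1 hi with rfl | hi
        · exact Ideal.isPrime_bot
        · exact ((hs i).1 hi).1.1) (I := P))
    by_cases hsub : (P : Set T) ⊆ ⋃ i ∈ ((insert ⊥ s : Finset (Ideal T)) : Set (Ideal T)), (i : Set T)
    · obtain ⟨Q, hQ, hPQ⟩ := hav.1 hsub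
      rcases Finset.mem_insert.1 hQ with rfl | hQ
      · exact absurd (le_bot_iff.1 hPQ) hP0
      · exact (Ideal.height_mono hPQ).trans
          (Ideal.height_le_one_of_isPrincipal_of_mem_minimalPrimes (Ideal.span {f}) Q ((hs Q).1 hQ))
    · exfalso
      obtain ⟨y, hyP, hy⟩ := Set.not_subset.1 hsub
      simp only [Set.mem_iUnion, not_exists] at hy
      have hy0 : y ≠ 0 := fun h => hy ⊥ (by simp) (by simp [h])
      obtain ⟨Q, hQ, hQP⟩ := Ideal.exists_minimalPrimes_le
        (show Ideal.span {y} ≤ P from (Ideal.span_singleton_le_iff_mem _).2 hyP)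
      have hQp : Q.IsPrime := hQ.1.1
      have hyQ : y ∈ Q := (Ideal.span_singleton_le_iff_mem _).1 hQ.1.2
      have hQh := Ideal.height_le_one_of_isPrincipal_of_mem_minimalPrimes (Ideal.span {y}) Q hQ
      have hfQ := hex Q hQp (fun h => hy0 (by rw [h] at hyQ; exact hyQ)) hQP hQh
      refine hy Q (Finset.mem_coe.2 (Finset.mem_insert_of_mem ((hs Q).2 ?_))) hyQ
      refine ⟨⟨hQp, (Ideal.span_singleton_le_iff_mem _).2 hfQ⟩, fun J hJ hJQ => ?_⟩
      by_contra hne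
      have := min_of_height_le_one Q hQh J hJ.1 (lt_of_le_not_ge hJQ hne)
      subst this
      exact hf0 ((Ideal.span_singleton_le_iff_mem _).1 hJ.2)
  refine ⟨P, inferInstance, hP0, le_rfl, ?_⟩
  have h2 := td_le_minimal (k := k) P hP0 (min_of_height_le_one P hPh)
  have h3 := td_add (k := k) (R := R) (T := T) trdeg_lt_aleph0_of_finiteType
  omega

theorem td_quot_comap {A B : Type v} [CommRing A] [CommRing B] [Algebra k A] [Algebra k B]
    (f : A →ₐ[k] B) (hf : Function.Surjective f) (J : Ideal B) :
    td k (A ⧸ J.comap f) = td k (B ⧸ J) := by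
  let g : A →ₐ[k] B ⧸ J := (Ideal.Quotient.mkₐ k J).comp f
  have hg : Function.Surjective g := (Ideal.Quotient.mkₐ_surjective k J).comp hf
  have hk : RingHom.ker g = J.comap f := by
    ext a
    rw [RingHom.mem_ker, Ideal.mem_comap]
    exact Ideal.Quotient.eq_zero_iff_mem
  rw [← hk, td, td, (Ideal.quotientKerAlgEquivOfSurjective hg).trdeg_eq]

theorem td_strictAnti {R : Type v} [CommRing R] [Algebra k R] 
    (hR : Algebra.trdeg k R < ℵ₀) (p q : Ideal R) [p.IsPrime] [q.IsPrime]
    (h : p < q) : td k (R ⧸ q) < td k (R ⧸ p) := by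
  let m := Ideal.Quotient.mkₐ k p
  have hm : Function.Surjective m := Ideal.Quotient.mkₐ_surjective k _
  have hker : RingHom.ker m = p := Ideal.Quotient.mkₐ_ker k _
  have hcm : (q.map m).comap m = q := by
    rw [Ideal.comap_map_of_surjective _ hm]
    exact sup_eq_left.2 (hker.le.trans h.le)
  have hPp : (q.map m).IsPrime := Ideal.map_isPrime_of_surjective hm (hker.le.trans h.le)
  have hne : q.map m ≠ ⊥ := by
    intro h0
    rw [h0] at hcm
    have : Ideal.comap m ⊥ = p := hker
    exact h.ne (this.symm.trans hcm)
  have := td_quot_lt (trdeg_quot_lt hR p) (q.map m) hne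
  rwa [← td_quot_comap m hm, hcm] at this

theorem height_add_le {R : Type v} [CommRing R] [Algebra k R] 
    (hR : Algebra.trdeg k R < ℵ₀) (p : Ideal R) [p.IsPrime] :
    p.height + (td k (R ⧸ p) : ℕ∞) ≤ td k R := by
  have hle : ∀ q : Ideal R, td k (R ⧸ q) ≤ td k R := fun q =>
    Cardinal.toNat_le_toNat (trdeg_le_of_surjective (Ideal.Quotient.mkₐ k q)
      (Ideal.Quotient.mkₐ_surjective k q)) hR
  let G : PrimeSpectrum R → ℕ := fun q => td k R - td k (R ⧸ q.asIdeal)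
  have hG : StrictMono G := fun q q' h => by
    have h1 := td_strictAnti hR q.asIdeal q'.asIdeal h
    have h2 := hle q.asIdeal
    simp only [G]
    omega
  have h1 := Order.height_le_height_apply_of_strictMono G hG ⟨p, inferInstance⟩
  rw [← PrimeSpectrum.height_eq_orderHeight, Order.height_nat] at h1
  refine (add_le_add_left h1 _).trans ?_
  have := hle p
  simp only [G]
  norm_cast
  omega

section main
variable {R T : Type v} [CommRing R] [IsDomain R] [CommRing T] [IsDomain T] [Algebra k R]
    [Algebra k T] [Algebra R T] [IsScalarTower k R T] [FaithfulSMul R T]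
    [Algebra.FiniteType k T]

theorem step (P : Ideal T) [P.IsPrime] (hP : td k (T ⧸ P) ≤ td k (R ⧸ P.under R))
    (Q₀ : Ideal T) [Q₀.IsPrime] (hlt : Q₀ < P) :
    ∃ Q : Ideal T, Q.IsPrime ∧ Q₀ < Q ∧ Q ≤ P ∧
      td k (R ⧸ Q₀.under R) ≤ td k (R ⧸ Q.under R) + 1 := by
  have : IsScalarTower k (R ⧸ Q₀.under R) (T ⧸ Q₀) := by
    refine IsScalarTower.of_algebraMap_eq fun a => ?_
    change Ideal.Quotient.mk Q₀ (algebraMap k T a) =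
      Ideal.Quotient.mk Q₀ (algebraMap R T (algebraMap k R a))
    rw [← IsScalarTower.algebraMap_apply]
  let mT := Ideal.Quotient.mkₐ k Q₀
  let mR := Ideal.Quotient.mkₐ k (Q₀.under R)
  have hmT : Function.Surjective mT := Ideal.Quotient.mkₐ_surjective k _
  have hmR : Function.Surjective mR := Ideal.Quotient.mkₐ_surjective k _
  have hker : RingHom.ker mT = Q₀ := Ideal.Quotient.mkₐ_ker k _
  have hcm : (P.map mT).comap mT = P := by
    rw [Ideal.comap_map_of_surjective _ hmT]
    refine sup_eq_left.2 ?_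
    exact hker.le.trans hlt.le
  have hPp : (P.map mT).IsPrime := Ideal.map_isPrime_of_surjective hmT (hker.le.trans hlt.le)
  have hunder : ∀ J : Ideal (T ⧸ Q₀),
      (J.under (R ⧸ Q₀.under R)).comap mR = (J.comap mT).under R := fun J => rfl
  have hR : ∀ J : Ideal (T ⧸ Q₀),
      td k ((R ⧸ Q₀.under R) ⧸ J.under (R ⧸ Q₀.under R)) = td k (R ⧸ (J.comap mT).under R) :=
    fun J => by rw [← hunder, td_quot_comap mR hmR]
  have hne : P.map mT ≠ ⊥ := by
    intro h
    rw [h] at hcm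
    have : Ideal.comap mT ⊥ = Q₀ := hker
    exact hlt.ne (this.symm.trans hcm)
  obtain ⟨Q, hQ, hQ0, hQP, hle⟩ := step_bot (k := k) (R := R ⧸ Q₀.under R) (T := T ⧸ Q₀)
    (P.map mT) hne (by rw [hR, hcm, ← td_quot_comap mT hmT, hcm]; exact hP)
  refine ⟨Q.comap mT, Ideal.comap_isPrime _ _, ?_, ?_, ?_⟩
  · have h0 : Ideal.comap mT ⊥ = Q₀ := hker
    refine lt_of_le_of_ne ?_ ?_
    · exact h0.symm.le.trans (Ideal.comap_mono bot_le)
    · intro h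
      exact hQ0 (Ideal.comap_injective_of_surjective mT hmT (h0.trans h)).symm
  · rw [← hcm]; exact Ideal.comap_mono hQP
  · rw [hR] at hle; exact hle

theorem climb (P : Ideal T) [P.IsPrime] (hP : td k (T ⧸ P) ≤ td k (R ⧸ P.under R))
    (Q₀ : Ideal T) (hQ₀ : Q₀.IsPrime) (hle : Q₀ ≤ P) :
    (Q₀.under R).height + (td k (R ⧸ Q₀.under R) : ℕ∞) ≤
      (P.under R).height + (td k (R ⧸ P.under R) : ℕ∞) := by
  have : IsNoetherianRing T := Algebra.FiniteType.isNoetherianRing k T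
  induction Q₀ using WellFoundedGT.induction with
  | ind Q₀ ih =>
  rcases hle.eq_or_lt with rfl | hlt
  · exact le_rfl
  obtain ⟨Q, hQ, hlt', hQP, htd⟩ := step (k := k) (R := R) P hP Q₀ hlt
  refine le_trans ?_ (ih Q hlt' hQ hQP)
  have hmono : Q₀.under R ≤ Q.under R := Ideal.comap_mono hlt'.le
  rcases hmono.eq_or_lt with heq | hlt2
  · rw [heq]
  · have h1 : (Q₀.under R).height + 1 ≤ (Q.under R).height := by
      have := Order.height_add_one_le (a := (⟨Q₀.under R, inferInstance⟩ : PrimeSpectrum R))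
        (b := ⟨Q.under R, inferInstance⟩) hlt2
      rwa [← PrimeSpectrum.height_eq_orderHeight, ← PrimeSpectrum.height_eq_orderHeight] at this
    have h2 : (td k (R ⧸ Q₀.under R) : ℕ∞) ≤ td k (R ⧸ Q.under R) + 1 := by exact_mod_cast htd
    calc _ ≤ (Q₀.under R).height + (td k (R ⧸ Q.under R) + 1) := by gcongr
      _ = ((Q₀.under R).height + 1) + td k (R ⧸ Q.under R) := by ring
      _ ≤ _ := by gcongr

theorem height_add_eq (P : Ideal T) [P.IsPrime] :
    (P.under R).height + (td k (R ⧸ P.under R) : ℕ∞) = td k R := by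
  refine le_antisymm (height_add_le (trdeg_sub_lt (T := T)) _) ?_
  obtain ⟨P', hP', hu, hle⟩ := enlarge (k := k) (R := R) P
  rw [← hu] at hle ⊢
  refine le_trans ?_ (climb (k := k) P' hle ⊥ Ideal.isPrime_bot bot_le)
  have h0 : (⊥ : Ideal T).under R = ⊥ := Ideal.under_bot R T
  rw [h0]
  have : td k (R ⧸ (⊥ : Ideal R)) = td k R := by
    rw [td, td, (AlgEquiv.quotientBot k R).trdeg_eq]
  rw [this]
  exact le_add_self

theorem dim_eq (k : Type u) [Field k] (R T : Type v) [CommRing R] [IsDomain R] [CommRing T]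
    [IsDomain T] [Algebra k R] [Algebra k T] [Algebra R T] [IsScalarTower k R T]
    [FaithfulSMul R T] [Algebra.FiniteType k T] : ringKrullDim R = ((td k R : ℕ∞) : WithBot ℕ∞) := by
  have hR : Algebra.trdeg k R < ℵ₀ := trdeg_sub_lt (T := T)
  apply le_antisymm
  · rw [ringKrullDim, Order.krullDim_eq_iSup_height]
    refine iSup_le fun p => ?_
    have := height_add_le hR p.asIdeal
    rw [PrimeSpectrum.height_eq_orderHeight] at this
    exact_mod_cast le_self_add.trans this
  · obtain ⟨P, hP⟩ := Ideal.exists_maximal T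
    have h1 := height_add_eq (k := k) (R := R) P
    have h2 : td k (R ⧸ P.under R) = 0 := by
      have : IsScalarTower k (R ⧸ P.under R) (T ⧸ P) := by
        refine IsScalarTower.of_algebraMap_eq fun a => ?_
        change Ideal.Quotient.mk P (algebraMap k T a) =
          Ideal.Quotient.mk P (algebraMap R T (algebraMap k R a))
        rw [← IsScalarTower.algebraMap_apply]
      have hz : Algebra.trdeg k (T ⧸ P) = 0 := by
        letI := Ideal.Quotient.field P
        have : Module.Finite k (T ⧸ P) := finite_of_finite_type_of_isJacobsonRing k (T ⧸ P)
        exact trdeg_eq_zero (R := k) (A := T ⧸ P)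
      have := td_le_of_inj (k := k) (IsScalarTower.toAlgHom k (R ⧸ P.under R) (T ⧸ P))
        (FaithfulSMul.algebraMap_injective (R ⧸ P.under R) (T ⧸ P))
        (by rw [hz]; exact Cardinal.aleph0_pos)
      have h0 : td k (T ⧸ P) = 0 := by rw [td, hz]; simp
      omega
    rw [h2] at h1
    rw [← h1]
    simpa using Ideal.height_le_ringKrullDim_of_ne_top (I := P.under R) (Ideal.IsPrime.ne_top')

end main

theorem td_frac {S F : Type v} [CommRing S] [IsDomain S] [Field F] [Algebra k S] [Algebra S F]
    [IsFractionRing S F] [Algebra k F] [IsScalarTower k S F] :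
    Algebra.trdeg k F = Algebra.trdeg k S := by
  have : FaithfulSMul S F := (faithfulSMul_iff_algebraMap_injective _ _).2
    (IsFractionRing.injective S F)
  have : Algebra.IsAlgebraic S F := IsLocalization.isAlgebraic F (nonZeroDivisors S)
  exact trdeg_alg (R := S) (T := F)

end
end SubAff

theorem SubAff.fractionFieldTrdeg_eq {k S : Type*} [Field k] [CommRing S] [IsDomain S]
    [Algebra k S] : fractionFieldTrdeg k S = Algebra.trdeg k S := by
  change @Algebra.trdeg k (FractionRing S) _ _ (fractionRingAlgebra k S) = _
  exact @SubAff.td_frac k _ S (FractionRing S) _ _ _ _ _ _ (fractionRingAlgebra k S)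
    (@IsScalarTower.of_algebraMap_eq' k S (FractionRing S) _ _ _ _ _
      (fractionRingAlgebra k S) rfl)

/-- Let `k` be a field, `T` an affine domain over `k`, and `R` a `k`-subalgebra of `T`.
Then for every prime ideal `P` of `T`,
`dim R = ht(P ∩ R) + td(R/(P ∩ R))`, where the height of the prime `P ∩ R` is the Krull
dimension of the localization of `R` at it, and `td` denotes the transcendence degree
over `k` of the fraction field. -/
theorem ringKrullDim_eq_height_add_trdeg_quotient
    {k T : Type*} [Field k] [CommRing T] [IsDomain T] [Algebra k T]
    [Algebra.FiniteType k T] (R : Subalgebra k T)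
    (P : Ideal T) (hP : P.IsPrime) :
    haveI hp : (P.comap (algebraMap R T)).IsPrime := hP.comap (algebraMap R T)
    ringKrullDim R =
      ringKrullDim (Localization.AtPrime (P.comap (algebraMap R T))) +
        cardinalToKrullDim (fractionFieldTrdeg k (R ⧸ P.comap (algebraMap R T))) := by
  have hp : (P.comap (algebraMap R T)).IsPrime := hP.comap (algebraMap R T)
  have : FaithfulSMul R T := (faithfulSMul_iff_algebraMap_injective _ _).2
    Subtype.val_injective
  have hlt : Algebra.trdeg k (R ⧸ P.comap (algebraMap R T)) < Cardinal.aleph0 :=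
    SubAff.trdeg_quot_lt (SubAff.trdeg_sub_lt (T := T)) _
  have h1 := SubAff.dim_eq k R T
  have h2 : (P.comap (algebraMap R T)).height +
      (SubAff.td k (R ⧸ P.comap (algebraMap R T)) : ℕ∞) = SubAff.td k R :=
    SubAff.height_add_eq (k := k) (R := R) P
  have h3 : cardinalToKrullDim (fractionFieldTrdeg k (R ⧸ P.comap (algebraMap R T))) =
      ((SubAff.td k (R ⧸ P.comap (algebraMap R T)) : ℕ∞) : WithBot ℕ∞) := by
    rw [SubAff.fractionFieldTrdeg_eq, cardinalToKrullDim, SubAff.td]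
    obtain ⟨n, hn⟩ := Cardinal.lt_aleph0.1 hlt
    rw [hn]
    simp
  rw [h3, IsLocalization.AtPrime.ringKrullDim_eq_height (P.comap (algebraMap R T))
    (Localization.AtPrime (P.comap (algebraMap R T))), h1, ← h2]
  rfl
end
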